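/- arXiv:2508.01141 — 2 statements merged into one kernel-verified Lean document; each statement's English description precedes it below -/
import Mathlib

section
/- Unique solvability of the scalar auxiliary-variable equation in the first-order IVS scheme (core of Theorem 3.1): let τ, M, λ, ν, ε, δ₀ > 0, β ≥ 0, γⁿ ∈ ℝ. Let φⁿ, μⁿ, pⁿ, φ₁, μ₁ : ℝ^d → ℝ and uⁿ, û₁ : ℝ^d → ℝ^d all be C², with E₁(φⁿ) + δ₀ > 0. Assume, pointwise on Ω: φ₁ + τ∇·(uⁿφⁿ) = MτΔμ₁; μ₁ = −λΔφ₁ + λβφ₁ + λF′(φⁿ); and û₁ + τ uⁿ·∇uⁿ − ντΔû₁ = −τφⁿ∇μⁿ − τγⁿ∇pⁿ; together with ∂ₙφ₁ = ∂ₙμ₁ = 0 on ∂Ω and û₁ = 0 on ∂Ω. Define A = √(E₁(φⁿ)+δ₀) − [λ(F′(φⁿ), φ₁) + τ(μ₁, ∇·(uⁿφⁿ))]/(2λ√(E₁(φⁿ)+δ₀)) − τ[(û₁, φⁿ∇μⁿ) + b(uⁿ, uⁿ, û₁) + γⁿ(∇pⁿ, û₁)]/(2λ√(E₁(φⁿ)+δ₀)).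 Then A = √(E₁(φⁿ)+δ₀) + [λ‖∇φ₁‖² + λβ‖φ₁‖² + Mτ‖∇μ₁‖² + ‖û₁‖² + ντ‖∇û₁‖²]/(2λ√(E₁(φⁿ)+δ₀)); in particular A > 0, so for every B ∈ ℝ the linear equation Aξ = B has a unique real solution ξ. -/
open MeasureTheory Finset

noncomputable section

/-- Partial derivative of `f` in coordinate direction `i`. -/
def pd {d : ℕ} (i : Fin d) (f : (Fin d → ℝ) → ℝ) (x : Fin d → ℝ) : ℝ :=
  fderiv ℝ f x (Pi.single i 1)

/-- Divergence of a vector field. -/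
def vdiv {d : ℕ} (u : (Fin d → ℝ) → Fin d → ℝ) (x : Fin d → ℝ) : ℝ :=
  ∑ i, pd i (fun y => u y i) x

/-- Laplacian. -/
def lap {d : ℕ} (f : (Fin d → ℝ) → ℝ) (x : Fin d → ℝ) : ℝ :=
  ∑ i, pd i (pd i f) x

/-- Convection term `(u·∇)v`, component `i`. -/
def convect {d : ℕ} (u v : (Fin d → ℝ) → Fin d → ℝ) (x : Fin d → ℝ) (i : Fin d) : ℝ :=
  ∑ j, u x j * pd j (fun y => v y i) x

/-- Trilinear form `b(u,v,w) = ∫_Ω (u·∇v)·w dx`. -/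
def trib {d : ℕ} (Ω : Set (Fin d → ℝ)) (u v w : (Fin d → ℝ) → Fin d → ℝ) : ℝ :=
  ∫ x in Ω, ∑ i, convect u v x i * w x i

/-- Homogeneous Neumann boundary condition on the box `[a,b]`. -/
def neumannBC {d : ℕ} (a b : Fin d → ℝ) (f : (Fin d → ℝ) → ℝ) : Prop :=
  ∀ i : Fin d, ∀ x ∈ Set.Icc a b, (x i = a i ∨ x i = b i) → pd i f x = 0

/-- `F(s) = G(s) - (β/2)s²` with `G(s) = (1-s²)²/(4ε²)`. -/
def Ffun (ε β s : ℝ) : ℝ := (1 - s^2)^2 / (4 * ε^2) - (β / 2) * s^2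

/-- `F′(s) = (s³ - s)/ε² - βs`. -/
def Fprime (ε β s : ℝ) : ℝ := (s^3 - s) / ε^2 - β * s

/-- `E₁(φ) = ∫_Ω F(φ) dx`. -/
def E1 {d : ℕ} (Ω : Set (Fin d → ℝ)) (ε β : ℝ) (φ : (Fin d → ℝ) → ℝ) : ℝ :=
  ∫ x in Ω, Ffun ε β (φ x)


theorem pd_contDiff {d : ℕ} {f : (Fin d → ℝ) → ℝ} (hf : ContDiff ℝ 2 f) (i : Fin d) :
    ContDiff ℝ 1 (pd i f) := by
  unfold pd
  have h : ContDiff ℝ 1 (fderiv ℝ f) := hf.fderiv_right (by norm_num)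
  exact h.clm_apply contDiff_const

theorem pd_continuous {d : ℕ} {f : (Fin d → ℝ) → ℝ} (hf : ContDiff ℝ 1 f) (i : Fin d) :
    Continuous (pd i f) := by
  unfold pd
  have h : Continuous (fderiv ℝ f) := hf.continuous_fderiv (by norm_num)
  exact h.clm_apply continuous_const

theorem lap_continuous {d : ℕ} {f : (Fin d → ℝ) → ℝ} (hf : ContDiff ℝ 2 f) :
    Continuous (lap f) := by
  unfold lap
  exact continuous_finsetSum _ fun i _ => pd_continuous (pd_contDiff hf i) i

theorem green_box {d : ℕ} (hd : 1 ≤ d) (a b : Fin d → ℝ) (hab : ∀ i, a i < b i)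
    {f g : (Fin d → ℝ) → ℝ} (hf : ContDiff ℝ 2 f) (hg : ContDiff ℝ 2 g)
    (hbc : ∀ i : Fin d, ∀ x ∈ Set.Icc a b, (x i = a i ∨ x i = b i) → g x * pd i f x = 0) :
    ∫ x in Set.Icc a b, g x * lap f x = - ∫ x in Set.Icc a b, ∑ i, pd i g x * pd i f x := by
  obtain ⟨n, rfl⟩ : ∃ n, d = n + 1 := ⟨d - 1, by omega⟩
  have hle : a ≤ b := fun i => (hab i).le
  have hg1 : ContDiff ℝ 1 g := hg.of_le (by norm_num)
  have hc1 : Continuous (fun x => g x * lap f x) := hg.continuous.mul (lap_continuous hf)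
  have hc2 : Continuous (fun x => ∑ i, pd i g x * pd i f x) :=
    continuous_finsetSum _ fun i _ => (pd_continuous hg1 i).mul (pd_contDiff hf i).continuous
  have hder : ∀ (i : Fin (n+1)) x, HasFDerivAt (fun y => g y * pd i f y)
      (g x • fderiv ℝ (pd i f) x + pd i f x • fderiv ℝ g x) x := fun i x =>
    ((hg1.differentiable (by norm_num)) x).hasFDerivAt.mul
      (((pd_contDiff hf i).differentiable (by norm_num)) x).hasFDerivAt
  have hsum : (fun x => ∑ i, (g x • fderiv ℝ (pd i f) x + pd i f x • fderiv ℝ g x)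
      (Pi.single i (1:ℝ))) = fun x => g x * lap f x + ∑ i, pd i g x * pd i f x := by
    funext x
    simp only [lap, Finset.mul_sum, ← Finset.sum_add_distrib]
    refine Finset.sum_congr rfl fun i _ => ?_
    simp [pd, mul_comm]
  have key := integral_divergence_of_hasFDerivAt_off_countable' a b hle
    (fun i y => g y * pd i f y)
    (fun i x => g x • fderiv ℝ (pd i f) x + pd i f x • fderiv ℝ g x) ∅ Set.countable_empty
    (fun i => (hg.continuous.mul (pd_contDiff hf i).continuous).continuousOn)
    (fun x _ i => hder i x)
    (by rw [hsum]; exact (hc1.add hc2).continuousOn.integrableOn_compact isCompact_Icc)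
  rw [hsum, integral_add (hc1.continuousOn.integrableOn_compact isCompact_Icc)
    (hc2.continuousOn.integrableOn_compact isCompact_Icc)] at key
  have hz : ∀ (i : Fin (n+1)) (c : ℝ), (c = a i ∨ c = b i) →
      ∫ x in Set.Icc (a ∘ i.succAbove) (b ∘ i.succAbove),
        g (i.insertNth c x) * pd i f (i.insertNth c x) = 0 := by
    intro i c hc
    refine setIntegral_eq_zero_of_forall_eq_zero fun x hx => ?_
    refine hbc i _ ?_ (by simpa using hc)
    rw [Fin.insertNth_mem_Icc]
    refine ⟨?_, hx⟩
    have := (hab i).le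
    rcases hc with rfl | rfl <;> simp [this]
  rw [Finset.sum_eq_zero (fun i _ => by
    rw [hz i _ (Or.inr rfl), hz i _ (Or.inl rfl), sub_zero])] at key
  linarith

theorem face_frontier {d : ℕ} (a b x : Fin d → ℝ) (i : Fin d) (hx : x ∈ Set.Icc a b)
    (h : x i = a i ∨ x i = b i) : x ∈ frontier (Set.Icc a b) := by
  refine ⟨subset_closure hx, fun hi => ?_⟩
  rw [← Set.pi_univ_Icc, interior_pi_set Set.finite_univ] at hi
  have := hi i (Set.mem_univ i)
  simp only [interior_Icc] at this
  rcases h with h | h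
  · exact this.1.ne' h
  · exact this.2.ne h

/-- Unique solvability of the scalar auxiliary-variable equation of the first-order
IVS scheme (core of Theorem 3.1). -/
theorem stmt4 (d : ℕ) (hd : 1 ≤ d) (a b : Fin d → ℝ) (hab : ∀ i, a i < b i)
    (Ω : Set (Fin d → ℝ)) (hΩ : Ω = Set.Icc a b)
    (τ M lam ν ε δ₀ β γn : ℝ)
    (hτ : 0 < τ) (hM : 0 < M) (hlam : 0 < lam) (hν : 0 < ν) (hε : 0 < ε)
    (hδ₀ : 0 < δ₀) (hβ : 0 ≤ β)
    (φn μn pn φ1 μ1 : (Fin d → ℝ) → ℝ) (un uhat1 : (Fin d → ℝ) → Fin d → ℝ)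
    (hφn : ContDiff ℝ 2 φn) (hμn : ContDiff ℝ 2 μn) (hpn : ContDiff ℝ 2 pn)
    (hφ1 : ContDiff ℝ 2 φ1) (hμ1 : ContDiff ℝ 2 μ1)
    (hun : ContDiff ℝ 2 un) (huhat1 : ContDiff ℝ 2 uhat1)
    (hE1pos : 0 < E1 Ω ε β φn + δ₀)
    (heq1 : ∀ x ∈ Ω,
      φ1 x + τ * vdiv (fun y i => un y i * φn y) x = M * τ * lap μ1 x)
    (heq2 : ∀ x ∈ Ω,
      μ1 x = -lam * lap φ1 x + lam * β * φ1 x + lam * Fprime ε β (φn x))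
    (heq3 : ∀ x ∈ Ω, ∀ i : Fin d,
      uhat1 x i + τ * convect un un x i - ν * τ * lap (fun y => uhat1 y i) x
        = -τ * (φn x * pd i μn x) - τ * γn * pd i pn x)
    (hφbc : neumannBC a b φ1) (hμbc : neumannBC a b μ1)
    (huhatbc : ∀ x ∈ frontier Ω, uhat1 x = 0)
    (A : ℝ)
    (hA : A = Real.sqrt (E1 Ω ε β φn + δ₀)
      - (lam * (∫ x in Ω, Fprime ε β (φn x) * φ1 x)
          + τ * (∫ x in Ω, μ1 x * vdiv (fun y i => un y i * φn y) x))
        / (2 * lam * Real.sqrt (E1 Ω ε β φn + δ₀))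
      - τ * ((∫ x in Ω, ∑ i, uhat1 x i * (φn x * pd i μn x))
          + trib Ω un un uhat1
          + γn * (∫ x in Ω, ∑ i, pd i pn x * uhat1 x i))
        / (2 * lam * Real.sqrt (E1 Ω ε β φn + δ₀))) :
    A = Real.sqrt (E1 Ω ε β φn + δ₀)
      + (lam * (∫ x in Ω, ∑ i, (pd i φ1 x)^2) + lam * β * (∫ x in Ω, (φ1 x)^2)
          + M * τ * (∫ x in Ω, ∑ i, (pd i μ1 x)^2)
          + (∫ x in Ω, ∑ i, (uhat1 x i)^2)
          + ν * τ * (∫ x in Ω, ∑ i, ∑ j, (pd j (fun y => uhat1 y i) x)^2))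
        / (2 * lam * Real.sqrt (E1 Ω ε β φn + δ₀))
    ∧ 0 < A
    ∧ ∀ B : ℝ, ∃! ξ : ℝ, A * ξ = B := by
  subst hΩ
  have hI : ∀ {f : (Fin d → ℝ) → ℝ}, Continuous f → IntegrableOn f (Set.Icc a b) :=
    fun h => h.continuousOn.integrableOn_compact isCompact_Icc
  have hui : ∀ i, ContDiff ℝ 2 (fun y => uhat1 y i) := fun i => contDiff_pi.1 huhat1 i
  have huni : ∀ i, ContDiff ℝ 2 (fun y => un y i) := fun i => contDiff_pi.1 hun i
  have low : ∀ {f : (Fin d → ℝ) → ℝ}, ContDiff ℝ 2 f → ContDiff ℝ 1 f :=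
    fun h => h.of_le (by norm_num)
  have cpd : ∀ {f : (Fin d → ℝ) → ℝ}, ContDiff ℝ 2 f → ∀ i, Continuous (pd i f) :=
    fun h i => pd_continuous (low h) i
  have cF : Continuous (fun x => Fprime ε β (φn x)) := by
    have := hφn.continuous
    unfold Fprime
    fun_prop
  have cdiv : Continuous (vdiv (fun y i => un y i * φn y)) := by
    unfold vdiv
    exact continuous_finsetSum _ fun i _ => pd_continuous (low ((huni i).mul hφn)) i
  have cφ := hφ1.continuous
  have lφ := lap_continuous hφ1
  have lμ := lap_continuous hμ1
  have cμ := hμ1.continuous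
  have cu : ∀ i, Continuous (fun y => uhat1 y i) := fun i => (hui i).continuous
  -- Green identities
  have G1 := green_box hd a b hab hφ1 hφ1 (fun i x hx h => by rw [hφbc i x hx h, mul_zero])
  have G2 := green_box hd a b hab hμ1 hμ1 (fun i x hx h => by rw [hμbc i x hx h, mul_zero])
  have G3 := fun k => green_box hd a b hab (hui k) (hui k) (fun i x hx h => by
    rw [huhatbc x (face_frontier a b x i hx h)]; simp)
  simp only [← pow_two] at G1 G2 G3
  -- scalar part
  have S1 : lam * (∫ x in Set.Icc a b, Fprime ε β (φn x) * φ1 x)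
      + τ * (∫ x in Set.Icc a b, μ1 x * vdiv (fun y i => un y i * φn y) x)
      = lam * (∫ x in Set.Icc a b, φ1 x * lap φ1 x)
        - lam * β * (∫ x in Set.Icc a b, (φ1 x)^2)
        + M * τ * (∫ x in Set.Icc a b, μ1 x * lap μ1 x) := by
    simp only [← integral_const_mul]
    rw [← integral_add (hI (by fun_prop)) (hI (by fun_prop)),
      ← integral_sub (hI (by fun_prop)) (hI (by fun_prop)),
      ← integral_add (hI (by fun_prop)) (hI (by fun_prop))]
    refine setIntegral_congr_fun measurableSet_Icc fun x hx => ?_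
    have e1 := heq1 x hx
    have e2 := heq2 x hx
    beta_reduce
    linear_combination μ1 x * e1 - φ1 x * e2
  have cconv : ∀ i, Continuous (fun x => convect un un x i) := fun i => by
    unfold convect
    exact continuous_finsetSum _ fun j _ => (huni j).continuous.mul (cpd (huni i) j)
  have S2 : τ * ((∫ x in Set.Icc a b, ∑ i, uhat1 x i * (φn x * pd i μn x))
          + trib (Set.Icc a b) un un uhat1
          + γn * (∫ x in Set.Icc a b, ∑ i, pd i pn x * uhat1 x i))
      = ν * τ * (∫ x in Set.Icc a b, ∑ i, uhat1 x i * lap (fun y => uhat1 y i) x)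
        - (∫ x in Set.Icc a b, ∑ i, (uhat1 x i)^2) := by
    have c1 : Continuous (fun x => ∑ i, uhat1 x i * (φn x * pd i μn x)) :=
      continuous_finsetSum _ fun i _ => (cu i).mul (hφn.continuous.mul (cpd hμn i))
    have c2 : Continuous (fun x => ∑ i, convect un un x i * uhat1 x i) :=
      continuous_finsetSum _ fun i _ => (cconv i).mul (cu i)
    have c3 : Continuous (fun x => ∑ i, pd i pn x * uhat1 x i) :=
      continuous_finsetSum _ fun i _ => (cpd hpn i).mul (cu i)
    have c4 : Continuous (fun x => ∑ i, uhat1 x i * lap (fun y => uhat1 y i) x) :=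
      continuous_finsetSum _ fun i _ => (cu i).mul (lap_continuous (hui i))
    have c5 : Continuous (fun x => ∑ i, (uhat1 x i)^2) :=
      continuous_finsetSum _ fun i _ => (cu i).pow 2
    unfold trib
    rw [← integral_const_mul, ← integral_const_mul, ← integral_add (hI c1) (hI c2),
      ← integral_add (hI (by fun_prop)) (hI (by fun_prop)), ← integral_const_mul,
      ← integral_sub (hI (by fun_prop)) (hI (by fun_prop))]
    refine setIntegral_congr_fun measurableSet_Icc fun x hx => ?_
    simp only [Finset.mul_sum, ← Finset.sum_add_distrib, ← Finset.sum_sub_distrib]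
    refine Finset.sum_congr rfl fun i _ => ?_
    have e3 := heq3 x hx i
    linear_combination uhat1 x i * e3
  have S3 : (∫ x in Set.Icc a b, ∑ i, uhat1 x i * lap (fun y => uhat1 y i) x)
      = - ∫ x in Set.Icc a b, ∑ i, ∑ j, (pd j (fun y => uhat1 y i) x)^2 := by
    have k1 : ∀ i, Continuous (fun x => uhat1 x i * lap (fun y => uhat1 y i) x) :=
      fun i => (cu i).mul (lap_continuous (hui i))
    have k2 : ∀ i, Continuous (fun x => ∑ j, (pd j (fun y => uhat1 y i) x)^2) :=
      fun i => continuous_finsetSum _ fun j _ => (cpd (hui i) j).pow 2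
    rw [integral_finsetSum _ (fun i _ => hI (k1 i)),
      integral_finsetSum _ (fun i _ => hI (k2 i)), ← Finset.sum_neg_distrib]
    exact Finset.sum_congr rfl fun i _ => G3 i
  have hs : 0 < Real.sqrt (E1 (Set.Icc a b) ε β φn + δ₀) := Real.sqrt_pos.2 hE1pos
  rw [S1, S2, S3, G1, G2] at hA
  have hA' : A = Real.sqrt (E1 (Set.Icc a b) ε β φn + δ₀)
      + (lam * (∫ x in Set.Icc a b, ∑ i, (pd i φ1 x)^2)
          + lam * β * (∫ x in Set.Icc a b, (φ1 x)^2)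
          + M * τ * (∫ x in Set.Icc a b, ∑ i, (pd i μ1 x)^2)
          + (∫ x in Set.Icc a b, ∑ i, (uhat1 x i)^2)
          + ν * τ * (∫ x in Set.Icc a b, ∑ i, ∑ j, (pd j (fun y => uhat1 y i) x)^2))
        / (2 * lam * Real.sqrt (E1 (Set.Icc a b) ε β φn + δ₀)) := by
    rw [hA]; ring
  have hpos : 0 < A := by
    rw [hA']
    have n1 : 0 ≤ ∫ x in Set.Icc a b, ∑ i, (pd i φ1 x)^2 :=
      integral_nonneg fun x => Finset.sum_nonneg fun i _ => sq_nonneg _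
    have n2 : 0 ≤ ∫ x in Set.Icc a b, (φ1 x)^2 := integral_nonneg fun x => sq_nonneg _
    have n3 : 0 ≤ ∫ x in Set.Icc a b, ∑ i, (pd i μ1 x)^2 :=
      integral_nonneg fun x => Finset.sum_nonneg fun i _ => sq_nonneg _
    have n4 : 0 ≤ ∫ x in Set.Icc a b, ∑ i, (uhat1 x i)^2 :=
      integral_nonneg fun x => Finset.sum_nonneg fun i _ => sq_nonneg _
    have n5 : 0 ≤ ∫ x in Set.Icc a b, ∑ i, ∑ j, (pd j (fun y => uhat1 y i) x)^2 :=
      integral_nonneg fun x => Finset.sum_nonneg fun i _ =>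
        Finset.sum_nonneg fun j _ => sq_nonneg _
    refine add_pos_of_pos_of_nonneg hs (div_nonneg ?_ (by positivity))
    have := mul_nonneg hlam.le n1
    have := mul_nonneg (mul_nonneg hlam.le hβ) n2
    have := mul_nonneg (mul_nonneg hM.le hτ.le) n3
    have := mul_nonneg (mul_nonneg hν.le hτ.le) n5
    linarith
  refine ⟨hA', hpos, fun B => ⟨B / A, by field_simp, fun y hy => ?_⟩⟩
  rw [eq_div_iff hpos.ne', mul_comm]
  exact hy
end
end

section
/- Energy dissipation law for the Cahn–Hilliard–Navier–Stokes system (continuous level): let T > 0 and M, λ, ν, ε > 0. Let φ, μ, p : ℝ^d × [0,T] → ℝ and u : ℝ^d × [0,T] → ℝ^d be jointly C² (all partial derivatives in x up to order 2 and in t up to order 1 exist and are continuous, as well as the mixed derivatives ∂ₜ∂ₓᵢφ). Assume that for every t ∈ [0,T], pointwise on Ω: ∂ₜφ + ∇·(uφ) = MΔμ; μ = −λΔφ + λG′(φ); ∂ₜu + u·∇u − νΔu + ∇p = −φ∇μ; ∇·u = 0; with boundary conditions ∂ₙφ(·,t) = ∂ₙμ(·,t) = 0 and u(·,t) = 0 on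 ∂Ω. Define E(t) = ∫_Ω (½|u(x,t)|² + (λ/2)|∇φ(x,t)|² + λG(φ(x,t))) dx. Then for every t ∈ (0,T), E is differentiable at t with E′(t) = −M∫_Ω |∇μ(x,t)|² dx − ν∫_Ω ∑_{i,j}(∂ⱼuᵢ(x,t))² dx ≤ 0; in particular E is nonincreasing on [0,T]. -/
open MeasureTheory Finset

noncomputable section

/-- The Ginzburg–Landau potential `G(s) = (1 - s²)²/(4ε²)`. -/
def Gfun (ε s : ℝ) : ℝ := (1 - s^2)^2 / (4 * ε^2)

/-- `G′(s) = (s³ - s)/ε²`. -/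
def Gprime (ε s : ℝ) : ℝ := (s^3 - s) / ε^2


theorem pd_add' {d : ℕ} {i : Fin d} {f g : (Fin d → ℝ) → ℝ} {x : Fin d → ℝ}
    (hf : DifferentiableAt ℝ f x) (hg : DifferentiableAt ℝ g x) :
    pd i (fun y => f y + g y) x = pd i f x + pd i g x := by
  simp [pd, fderiv_fun_add hf hg]

theorem pd_sub' {d : ℕ} {i : Fin d} {f g : (Fin d → ℝ) → ℝ} {x : Fin d → ℝ}
    (hf : DifferentiableAt ℝ f x) (hg : DifferentiableAt ℝ g x) :
    pd i (fun y => f y - g y) x = pd i f x - pd i g x := by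
  simp [pd, fderiv_fun_sub hf hg]

theorem pd_mul' {d : ℕ} {i : Fin d} {f g : (Fin d → ℝ) → ℝ} {x : Fin d → ℝ}
    (hf : DifferentiableAt ℝ f x) (hg : DifferentiableAt ℝ g x) :
    pd i (fun y => f y * g y) x = f x * pd i g x + g x * pd i f x := by
  simp [pd, fderiv_fun_mul hf hg]

theorem pd_cmul {d : ℕ} {i : Fin d} {f : (Fin d → ℝ) → ℝ} {x : Fin d → ℝ} (c : ℝ)
    (hf : DifferentiableAt ℝ f x) :
    pd i (fun y => c * f y) x = c * pd i f x := by
  simp [pd, fderiv_const_mul hf c]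

theorem pd_sum' {d : ℕ} {i : Fin d} {f : Fin d → (Fin d → ℝ) → ℝ} {x : Fin d → ℝ}
    (hf : ∀ j, DifferentiableAt ℝ (f j) x) :
    pd i (fun y => ∑ j, f j y) x = ∑ j, pd i (f j) x := by
  simp [pd, fderiv_fun_sum (fun j _ => hf j)]

theorem contDiff_pd {d : ℕ} (i : Fin d) {f : (Fin d → ℝ) → ℝ} (hf : ContDiff ℝ 2 f) :
    ContDiff ℝ 1 (pd i f) := by
  have h : ContDiff ℝ 1 (fderiv ℝ f) := hf.fderiv_right (by norm_num)
  exact h.clm_apply contDiff_const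

theorem continuous_pd {d : ℕ} (i : Fin d) {f : (Fin d → ℝ) → ℝ} (hf : ContDiff ℝ 1 f) :
    Continuous (pd i f) := by
  have h : Continuous (fderiv ℝ f) := hf.continuous_fderiv (by norm_num)
  exact h.clm_apply continuous_const

/-- Divergence theorem with vanishing flux. -/
theorem integral_div_zero {d : ℕ} (hd : 1 ≤ d) {a b : Fin d → ℝ} (hab : ∀ i, a i < b i)
    (V : Fin d → (Fin d → ℝ) → ℝ) (hV : ∀ i, ContDiff ℝ 1 (V i))
    (h0 : ∀ i, ∀ x ∈ Set.Icc a b, (x i = a i ∨ x i = b i) → V i x = 0) :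
    ∫ x in Set.Icc a b, ∑ i, pd i (V i) x = 0 := by
  obtain ⟨n, rfl⟩ : ∃ n, d = n + 1 := ⟨d - 1, by omega⟩
  have hle : a ≤ b := fun i => (hab i).le
  have hc : Continuous (fun x => ∑ i, pd i (V i) x) :=
    continuous_finsetSum _ fun i _ => continuous_pd i (hV i)
  have key := integral_divergence_of_hasFDerivAt_off_countable' a b hle V
    (fun i x => fderiv ℝ (V i) x) ∅ Set.countable_empty
    (fun i => (hV i).continuous.continuousOn)
    (fun x _ i => ((hV i).differentiable (by norm_num) x).hasFDerivAt)
    (hc.continuousOn.integrableOn_compact isCompact_Icc)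
  have e : ∫ x in Set.Icc a b, ∑ i, pd i (V i) x
      = ∫ x in Set.Icc a b, ∑ i, fderiv ℝ (V i) x (Pi.single i 1) := rfl
  rw [e, key]
  apply Finset.sum_eq_zero
  intro i _
  have face : ∀ c : ℝ, (c = a i ∨ c = b i) →
      ∫ x in Set.Icc (a ∘ Fin.succAbove i) (b ∘ Fin.succAbove i), V i (Fin.insertNth i c x) = 0 := by
    intro c hcc
    apply setIntegral_eq_zero_of_forall_eq_zero
    intro x hx
    apply h0 i
    · rw [Fin.insertNth_mem_Icc]
      refine ⟨?_, hx⟩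
      rcases hcc with rfl | rfl
      · exact ⟨le_rfl, hle i⟩
      · exact ⟨hle i, le_rfl⟩
    · simpa using hcc
  rw [face _ (Or.inr rfl), face _ (Or.inl rfl), sub_zero]

theorem mem_frontier_of_face {d : ℕ} {a b x : Fin d → ℝ} (hx : x ∈ Set.Icc a b) (i : Fin d)
    (h : x i = a i ∨ x i = b i) : x ∈ frontier (Set.Icc a b) := by
  rw [frontier, isClosed_Icc.closure_eq]
  refine ⟨hx, fun hi => ?_⟩
  rw [← Set.pi_univ_Icc, interior_pi_set Set.finite_univ] at hi
  have h' : x i ∈ interior (Set.Icc (a i) (b i)) := hi i (Set.mem_univ i)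
  rw [interior_Icc] at h'
  rcases h with h | h
  · exact absurd h h'.1.ne'
  · exact absurd h h'.2.ne

/-- Differentiation under the integral for jointly C¹ integrands. -/
theorem hasDerivAt_integral_box {d : ℕ} (a b : Fin d → ℝ) (e : (Fin d → ℝ) × ℝ → ℝ)
    (he : ContDiff ℝ 1 e) (t : ℝ) :
    HasDerivAt (fun s => ∫ x in Set.Icc a b, e (x, s))
      (∫ x in Set.Icc a b, fderiv ℝ e (x, t) (0, 1)) t := by
  have hc' : Continuous (fun q => fderiv ℝ e q (0, 1)) :=
    (he.continuous_fderiv (by norm_num)).clm_apply continuous_const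
  obtain ⟨C, hC⟩ := ((isCompact_Icc (a := a) (b := b)).prod
    (isCompact_closedBall t 1)).exists_bound_of_continuousOn hc'.continuousOn
  have hcs : ∀ s, Continuous (fun x => e (x, s)) := fun s =>
    he.continuous.comp (by fun_prop)
  refine (hasDerivAt_integral_of_dominated_loc_of_deriv_le
    (μ := volume.restrict (Set.Icc a b)) (F := fun s x => e (x, s))
    (F' := fun s x => fderiv ℝ e (x, s) (0, 1)) (s := Metric.closedBall t 1)
    (bound := fun _ => C) (Metric.closedBall_mem_nhds t one_pos) ?_ ?_ ?_ ?_ ?_ ?_).2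
  · exact Filter.Eventually.of_forall fun s => (hcs s).aestronglyMeasurable
  · exact (hcs t).continuousOn.integrableOn_compact isCompact_Icc
  · exact (hc'.comp (by fun_prop : Continuous fun x : Fin d → ℝ => (x, t))).aestronglyMeasurable
  · refine (ae_restrict_iff' measurableSet_Icc).2 (Filter.Eventually.of_forall ?_)
    intro x hx s hs
    exact hC (x, s) ⟨hx, hs⟩
  · exact (continuous_const (y := C)).continuousOn.integrableOn_compact isCompact_Icc
  · refine Filter.Eventually.of_forall fun x s _ => ?_
    have h1 : HasFDerivAt e (fderiv ℝ e (x, s)) (x, s) :=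
      (he.differentiable (by norm_num) _).hasFDerivAt
    exact h1.comp_hasDerivAt s ((hasDerivAt_const s x).prodMk (hasDerivAt_id s))

theorem pd_slice {d : ℕ} (i : Fin d) {f : (Fin d → ℝ) × ℝ → ℝ} (hf : Differentiable ℝ f)
    (x : Fin d → ℝ) (t : ℝ) :
    pd i (fun y => f (y, t)) x = fderiv ℝ f (x, t) (Pi.single i 1, 0) := by
  have h1 : HasFDerivAt f (fderiv ℝ f (x, t)) (x, t) := (hf _).hasFDerivAt
  have h3 : HasFDerivAt (fun y => f (y, t))
      ((fderiv ℝ f (x, t)).comp (ContinuousLinearMap.inl ℝ (Fin d → ℝ) ℝ)) x :=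
    HasFDerivAt.comp (g := f) x h1 (hasFDerivAt_prodMk_left x t)
  rw [pd, h3.fderiv]
  simp

theorem hasDerivAt_slice {d : ℕ} {f : (Fin d → ℝ) × ℝ → ℝ} (hf : Differentiable ℝ f)
    (x : Fin d → ℝ) (t : ℝ) :
    HasDerivAt (fun s => f (x, s)) (fderiv ℝ f (x, t) (0, 1)) t := by
  have h1 : HasFDerivAt f (fderiv ℝ f (x, t)) (x, t) := (hf _).hasFDerivAt
  exact h1.comp_hasDerivAt t ((hasDerivAt_const t x).prodMk (hasDerivAt_id t))

theorem contDiff_dir {d : ℕ} (v : (Fin d → ℝ) × ℝ) {f : (Fin d → ℝ) × ℝ → ℝ}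
    (hf : ContDiff ℝ 2 f) : ContDiff ℝ 1 (fun q => fderiv ℝ f q v) := by
  have h : ContDiff ℝ 1 (fderiv ℝ f) := hf.fderiv_right (by norm_num)
  exact h.clm_apply contDiff_const

theorem fderiv_dir_comm {d : ℕ} (v w : (Fin d → ℝ) × ℝ) {f : (Fin d → ℝ) × ℝ → ℝ}
    (hf : ContDiff ℝ 2 f) (q : (Fin d → ℝ) × ℝ) :
    fderiv ℝ (fun q => fderiv ℝ f q v) q w = fderiv ℝ (fun q => fderiv ℝ f q w) q v := by
  have h : ContDiff ℝ 1 (fderiv ℝ f) := hf.fderiv_right (by norm_num)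
  have hd : DifferentiableAt ℝ (fderiv ℝ f) q := h.differentiable (by norm_num) q
  have hs : IsSymmSndFDerivAt ℝ f q := hf.contDiffAt.isSymmSndFDerivAt (by simp)
  have key : ∀ v w, fderiv ℝ (fun q => fderiv ℝ f q v) q w = fderiv ℝ (fderiv ℝ f) q w v := by
    intro v w
    rw [fderiv_clm_apply hd (differentiableAt_const v)]
    simp
  rw [key, key, hs.eq]

/-- The energy flux. -/
def flux {d : ℕ} (lam M ν : ℝ) (f g m pr : (Fin d → ℝ) → ℝ) (v : (Fin d → ℝ) → Fin d → ℝ)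
    (j : Fin d) (x : Fin d → ℝ) : ℝ :=
  lam * (g x * pd j f x) + M * (m x * pd j m x) - m x * (v x j * f x)
    - (1/2) * (v x j * ∑ i, v x i * v x i) + ν * (∑ i, v x i * pd j (fun y => v y i) x)
    - v x j * pr x

theorem flux_contDiff {d : ℕ} (lam M ν : ℝ) {f g m pr : (Fin d → ℝ) → ℝ}
    {v : (Fin d → ℝ) → Fin d → ℝ} (hf : ContDiff ℝ 2 f) (hg : ContDiff ℝ 1 g)
    (hm : ContDiff ℝ 2 m) (hpr : ContDiff ℝ 2 pr) (hv : ∀ i, ContDiff ℝ 2 (fun y => v y i))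
    (j : Fin d) : ContDiff ℝ 1 (flux lam M ν f g m pr v j) := by
  have hf' := contDiff_pd j hf
  have hm' := contDiff_pd j hm
  have hv' := fun i => contDiff_pd j (hv i)
  have hf1 : ContDiff ℝ 1 f := hf.of_le (by norm_num)
  have hm1 : ContDiff ℝ 1 m := hm.of_le (by norm_num)
  have hp1 : ContDiff ℝ 1 pr := hpr.of_le (by norm_num)
  have hv1 : ∀ i, ContDiff ℝ 1 (fun y => v y i) := fun i => (hv i).of_le (by norm_num)
  have s1 : ContDiff ℝ 1 (fun x => ∑ i, v x i * v x i) :=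
    ContDiff.sum fun i _ => (hv1 i).mul (hv1 i)
  have s2 : ContDiff ℝ 1 (fun x => ∑ i, v x i * pd j (fun y => v y i) x) :=
    ContDiff.sum fun i _ => (hv1 i).mul (hv' i)
  exact (((((contDiff_const.mul (hg.mul hf')).add (contDiff_const.mul (hm1.mul hm'))).sub
    (hm1.mul ((hv1 j).mul hf1))).sub (contDiff_const.mul ((hv1 j).mul s1))).add
    (contDiff_const.mul s2)).sub ((hv1 j).mul hp1)

theorem flux_div {d : ℕ} (lam M ν : ℝ) {f g m pr : (Fin d → ℝ) → ℝ}
    {v : (Fin d → ℝ) → Fin d → ℝ} (hf : ContDiff ℝ 2 f) (hg : ContDiff ℝ 1 g)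
    (hm : ContDiff ℝ 2 m) (hpr : ContDiff ℝ 2 pr) (hv : ∀ i, ContDiff ℝ 2 (fun y => v y i))
    (x : Fin d → ℝ) :
    ∑ j, pd j (flux lam M ν f g m pr v j) x =
      lam * (∑ j, pd j f x * pd j g x) + lam * g x * lap f x
      + M * (∑ j, (pd j m x)^2) + M * m x * lap m x
      - m x * vdiv (fun y i => v y i * f y) x - f x * (∑ j, v x j * pd j m x)
      - (∑ i, v x i * convect v v x i) - (1/2) * vdiv v x * (∑ i, v x i * v x i)
      + ν * (∑ i, ∑ j, (pd j (fun y => v y i) x)^2)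
      + ν * (∑ i, v x i * lap (fun y => v y i) x)
      - (∑ j, v x j * pd j pr x) - vdiv v x * pr x := by
  have hf' := fun j => (contDiff_pd j hf).differentiable (by norm_num) x
  have hm' := fun j => (contDiff_pd j hm).differentiable (by norm_num) x
  have hv' := fun j i => (contDiff_pd j (hv i)).differentiable (by norm_num) x
  have hf1 := hf.differentiable (by norm_num) x
  have hg1 := hg.differentiable (by norm_num) x
  have hm1 := hm.differentiable (by norm_num) x
  have hp1 := hpr.differentiable (by norm_num) x
  have hv1 := fun i => (hv i).differentiable (by norm_num) x
  have s1 : DifferentiableAt ℝ (fun x => ∑ i, v x i * v x i) x :=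
    DifferentiableAt.fun_sum fun i _ => (hv1 i).mul (hv1 i)
  have s2 : ∀ j, DifferentiableAt ℝ (fun x => ∑ i, v x i * pd j (fun y => v y i) x) x :=
    fun j => DifferentiableAt.fun_sum fun i _ => (hv1 i).mul (hv' j i)
  have step : ∀ j, pd j (flux lam M ν f g m pr v j) x =
      lam * (g x * pd j (pd j f) x + pd j f x * pd j g x)
      + M * (m x * pd j (pd j m) x + pd j m x * pd j m x)
      - (m x * pd j (fun y => v y j * f y) x + (v x j * f x) * pd j m x)
      - (1/2) * (v x j * (∑ i, (v x i * pd j (fun y => v y i) x + v x i * pd j (fun y => v y i) x))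
          + (∑ i, v x i * v x i) * pd j (fun y => v y j) x)
      + ν * (∑ i, (v x i * pd j (pd j (fun y => v y i)) x
          + pd j (fun y => v y i) x * pd j (fun y => v y i) x))
      - (v x j * pd j pr x + pr x * pd j (fun y => v y j) x) := by
    intro j
    have t1 := hg1.fun_mul (hf' j)
    have t2 := hm1.fun_mul (hm' j)
    have t3' := (hv1 j).fun_mul hf1
    have t3 := hm1.fun_mul t3'
    have t4 := (hv1 j).fun_mul s1
    have t6 := (hv1 j).fun_mul hp1
    have c1 := t1.const_mul lam
    have c2 := t2.const_mul M
    have c4 := t4.const_mul (1/2)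
    have c5 := (s2 j).const_mul ν
    have a2 := c1.fun_add c2
    have a3 := a2.fun_sub t3
    have a4 := a3.fun_sub c4
    have a5 := a4.fun_add c5
    unfold flux
    rw [pd_sub' a5 t6, pd_add' a4 c5, pd_sub' a3 c4, pd_sub' a2 t3, pd_add' c1 c2,
      pd_cmul _ t1, pd_cmul _ t2, pd_cmul _ t4, pd_cmul _ (s2 j), pd_mul' hg1 (hf' j),
      pd_mul' hm1 (hm' j), pd_mul' hm1 t3', pd_mul' (hv1 j) s1, pd_mul' (hv1 j) hp1,
      pd_sum' (fun i => (hv1 i).fun_mul (hv1 i)), pd_sum' (fun i => (hv1 i).fun_mul (hv' j i))]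
    rw [Finset.sum_congr rfl (fun i _ => pd_mul' (hv1 i) (hv1 i)),
      Finset.sum_congr rfl (fun i _ => pd_mul' (hv1 i) (hv' j i))]
  have e1 : ∑ i, v x i * convect v v x i
      = ∑ j, v x j * ∑ i, v x i * pd j (fun y => v y i) x := by
    simp only [convect, Finset.mul_sum]
    rw [Finset.sum_comm]
    refine Finset.sum_congr rfl fun j _ => Finset.sum_congr rfl fun i _ => by ring
  have e2 : ∑ i, ∑ j, (pd j (fun y => v y i) x)^2
      = ∑ j, ∑ i, (pd j (fun y => v y i) x)^2 := Finset.sum_comm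
  have e3 : ∑ i, v x i * lap (fun y => v y i) x
      = ∑ j, ∑ i, v x i * pd j (pd j (fun y => v y i)) x := by
    simp only [lap, Finset.mul_sum]
    exact Finset.sum_comm
  obtain ⟨S, hS⟩ : ∃ S : Fin d → ℝ, ∀ j, S j = ∑ i, v x i * pd j (fun y => v y i) x :=
    ⟨_, fun _ => rfl⟩
  obtain ⟨P, hP⟩ : ∃ P : Fin d → ℝ, ∀ j, P j = ∑ i, (pd j (fun y => v y i) x)^2 :=
    ⟨_, fun _ => rfl⟩
  obtain ⟨R, hR⟩ : ∃ R : Fin d → ℝ, ∀ j, R j = ∑ i, v x i * pd j (pd j (fun y => v y i)) x :=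
    ⟨_, fun _ => rfl⟩
  rw [e1, e2, e3]
  simp only [step, Finset.sum_add_distrib (f := fun i => v x i * _), ← pow_two (pd _ _ x)]
  simp only [← hS, ← hP, ← hR]
  generalize ∑ i, v x i * v x i = Q
  simp only [lap, vdiv, Finset.sum_mul, Finset.mul_sum, ← Finset.sum_add_distrib,
    ← Finset.sum_sub_distrib]
  refine Finset.sum_congr rfl fun j _ => ?_
  ring

theorem hasDerivAt_Gfun (ε s : ℝ) (hε : 0 < ε) : HasDerivAt (Gfun ε) (Gprime ε s) s := by
  have h := ((((hasDerivAt_id s).pow 2).const_sub 1).pow 2).div_const (4 * ε^2)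
  refine h.congr_deriv ?_
  simp [Gprime]
  field_simp
  ring

/-- Energy dissipation law for the Cahn–Hilliard–Navier–Stokes system (continuous
level): `E′(t) = −M‖∇μ‖² − ν‖∇u‖² ≤ 0`, so the energy is nonincreasing. -/
theorem stmt15 (d : ℕ) (hd : 1 ≤ d) (a b : Fin d → ℝ) (hab : ∀ i, a i < b i)
    (T M lam ν ε : ℝ) (hT : 0 < T) (hM : 0 < M) (hlam : 0 < lam) (hν : 0 < ν)
    (hε : 0 < ε)
    (φ μ p : (Fin d → ℝ) → ℝ → ℝ) (u : (Fin d → ℝ) → ℝ → Fin d → ℝ)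
    (hφ : ContDiff ℝ 2 (fun q : (Fin d → ℝ) × ℝ => φ q.1 q.2))
    (hμ : ContDiff ℝ 2 (fun q : (Fin d → ℝ) × ℝ => μ q.1 q.2))
    (hp : ContDiff ℝ 2 (fun q : (Fin d → ℝ) × ℝ => p q.1 q.2))
    (hu : ContDiff ℝ 2 (fun q : (Fin d → ℝ) × ℝ => u q.1 q.2))
    -- the Cahn–Hilliard equation
    (heq1 : ∀ t ∈ Set.Icc (0 : ℝ) T, ∀ x ∈ Set.Icc a b,
      deriv (fun s => φ x s) t + vdiv (fun y i => u y t i * φ y t) x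
        = M * lap (fun y => μ y t) x)
    -- the chemical potential
    (heq2 : ∀ t ∈ Set.Icc (0 : ℝ) T, ∀ x ∈ Set.Icc a b,
      μ x t = -lam * lap (fun y => φ y t) x + lam * Gprime ε (φ x t))
    -- the momentum equation
    (heq3 : ∀ t ∈ Set.Icc (0 : ℝ) T, ∀ x ∈ Set.Icc a b, ∀ i : Fin d,
      deriv (fun s => u x s i) t + convect (fun y => u y t) (fun y => u y t) x i
        - ν * lap (fun y => u y t i) x + pd i (fun y => p y t) x
        = -(φ x t * pd i (fun y => μ y t) x))
    -- incompressibility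
    (heq4 : ∀ t ∈ Set.Icc (0 : ℝ) T, ∀ x ∈ Set.Icc a b, vdiv (fun y => u y t) x = 0)
    -- boundary conditions
    (hφbc : ∀ t ∈ Set.Icc (0 : ℝ) T, neumannBC a b (fun y => φ y t))
    (hμbc : ∀ t ∈ Set.Icc (0 : ℝ) T, neumannBC a b (fun y => μ y t))
    (hubc : ∀ t ∈ Set.Icc (0 : ℝ) T, ∀ x ∈ frontier (Set.Icc a b), u x t = 0)
    -- the total energy
    (E : ℝ → ℝ)
    (hE : E = fun t => ∫ x in Set.Icc a b,
      ((1/2) * (∑ i, (u x t i)^2)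
        + (lam/2) * (∑ i, (pd i (fun y => φ y t) x)^2)
        + lam * Gfun ε (φ x t))) :
    (∀ t ∈ Set.Ioo (0 : ℝ) T,
      HasDerivAt E
        (-M * (∫ x in Set.Icc a b, ∑ i, (pd i (fun y => μ y t) x)^2)
          - ν * (∫ x in Set.Icc a b, ∑ i, ∑ j, (pd j (fun y => u y t i) x)^2)) t
      ∧ -M * (∫ x in Set.Icc a b, ∑ i, (pd i (fun y => μ y t) x)^2)
          - ν * (∫ x in Set.Icc a b, ∑ i, ∑ j, (pd j (fun y => u y t i) x)^2) ≤ 0)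
    ∧ ∀ s ∈ Set.Icc (0 : ℝ) T, ∀ t ∈ Set.Icc (0 : ℝ) T, s ≤ t → E t ≤ E s := by
  -- components as joint functions
  set Φ : (Fin d → ℝ) × ℝ → ℝ := fun q => φ q.1 q.2 with hΦ
  set U : Fin d → (Fin d → ℝ) × ℝ → ℝ := fun i q => u q.1 q.2 i with hU
  have hUc : ∀ i, ContDiff ℝ 2 (U i) := fun i => (contDiff_pi.1 hu) i
  have slice : ∀ t : ℝ, ContDiff ℝ 2 (fun y : Fin d → ℝ => (y, t)) := fun t =>
    contDiff_id.prodMk contDiff_const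
  have hφd : Differentiable ℝ Φ := hφ.differentiable (by norm_num)
  have hUd : ∀ i, Differentiable ℝ (U i) := fun i => (hUc i).differentiable (by norm_num)
  -- the energy density
  set e : (Fin d → ℝ) × ℝ → ℝ := fun q => (1/2) * (∑ i, (U i q)^2)
    + (lam/2) * (∑ i, (fderiv ℝ Φ q (Pi.single i 1, 0))^2) + lam * Gfun ε (Φ q) with he
  have hec : ContDiff ℝ 1 e := by
    have h1 : ∀ i, ContDiff ℝ 1 (U i) := fun i => (hUc i).of_le (by norm_num)
    have h2 : ContDiff ℝ 1 Φ := hφ.of_le (by norm_num)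
    have h3 : ContDiff ℝ 1 (fun q => ∑ i, (U i q)^2) := ContDiff.sum fun i _ => (h1 i).pow 2
    have h4 : ContDiff ℝ 1 (fun q => ∑ i, (fderiv ℝ Φ q (Pi.single i 1, 0))^2) :=
      ContDiff.sum fun i _ => (contDiff_dir (Pi.single i 1, 0) hφ).pow 2
    have h5 : ContDiff ℝ 1 (fun q => Gfun ε (Φ q)) := by
      unfold Gfun
      exact ((contDiff_const.sub (h2.pow 2)).pow 2).div_const _
    exact ((contDiff_const.mul h3).add (contDiff_const.mul h4)).add (contDiff_const.mul h5)
  have hEe : E = fun t => ∫ x in Set.Icc a b, e (x, t) := by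
    rw [hE]
    funext t
    congr 1
    funext x
    have : ∀ i, pd i (fun y => φ y t) x = fderiv ℝ Φ (x, t) (Pi.single i 1, 0) :=
      fun i => pd_slice i hφd x t
    simp only [this, he, hΦ, hU]
  have hder : ∀ t, HasDerivAt E (∫ x in Set.Icc a b, fderiv ℝ e (x, t) (0, 1)) t := by
    intro t
    rw [hEe]
    exact hasDerivAt_integral_box a b e hec t
  -- the dissipation identity
  have hval : ∀ t ∈ Set.Icc (0 : ℝ) T, ∫ x in Set.Icc a b, fderiv ℝ e (x, t) (0, 1)
      = -M * (∫ x in Set.Icc a b, ∑ i, (pd i (fun y => μ y t) x)^2)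
          - ν * (∫ x in Set.Icc a b, ∑ i, ∑ j, (pd j (fun y => u y t i) x)^2) := by
    intro t ht
    set g : (Fin d → ℝ) → ℝ := fun y => fderiv ℝ Φ (y, t) (0, 1) with hgdef
    have hf : ContDiff ℝ 2 (fun y => φ y t) := hφ.comp (slice t)
    have hm : ContDiff ℝ 2 (fun y => μ y t) := hμ.comp (slice t)
    have hpr : ContDiff ℝ 2 (fun y => p y t) := hp.comp (slice t)
    have hv : ∀ i, ContDiff ℝ 2 (fun y => u y t i) := fun i => (hUc i).comp (slice t)
    have hg : ContDiff ℝ 1 g :=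
      (contDiff_dir (0, 1) hφ).comp ((slice t).of_le (by norm_num))
    have hpoint : ∀ x ∈ Set.Icc a b, fderiv ℝ e (x, t) (0, 1)
        = ∑ j, pd j (flux lam M ν (fun y => φ y t) g (fun y => μ y t) (fun y => p y t)
            (fun y => u y t) j) x
          + (-M * ∑ i, (pd i (fun y => μ y t) x)^2
            - ν * ∑ i, ∑ j, (pd j (fun y => u y t i) x)^2) := by
      intro x hx
      have dU : ∀ i, HasDerivAt (fun s => U i (x, s)) (deriv (fun s => u x s i) t) t := fun i =>
        (hasDerivAt_slice (hUd i) x t).differentiableAt.hasDerivAt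
      have dΦ : HasDerivAt (fun s => Φ (x, s)) (g x) t := hasDerivAt_slice hφd x t
      have dP : ∀ i, HasDerivAt (fun s => fderiv ℝ Φ (x, s) (Pi.single i 1, 0)) (pd i g x) t := by
        intro i
        have h := hasDerivAt_slice
          ((contDiff_dir (Pi.single i 1, 0) hφ).differentiable (by norm_num)) x t
        rw [fderiv_dir_comm _ _ hφ, ← pd_slice i
          ((contDiff_dir (0, 1) hφ).differentiable (by norm_num)) x t] at h
        exact h
      have hd1 : HasDerivAt (fun s => e (x, s))
          ((1/2) * (∑ i, 2 * (u x t i * deriv (fun s => u x s i) t))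
            + (lam/2) * (∑ i, 2 * (pd i (fun y => φ y t) x * pd i g x))
            + lam * (Gprime ε (φ x t) * g x)) t := by
        refine ((HasDerivAt.const_mul _ (HasDerivAt.fun_sum fun i _ => ?_)).add
          (HasDerivAt.const_mul _ (HasDerivAt.fun_sum fun i _ => ?_))).add
          (HasDerivAt.const_mul _ ?_)
        · refine ((dU i).pow 2).congr_deriv ?_
          simp [hU, mul_assoc]
        · refine ((dP i).pow 2).congr_deriv ?_
          have : pd i (fun y => φ y t) x = fderiv ℝ Φ (x, t) (Pi.single i 1, 0) :=
            pd_slice i hφd x t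
          simp [this, mul_assoc]
        · exact (hasDerivAt_Gfun ε _ hε).comp t dΦ
      have hd2 := hasDerivAt_slice (hec.differentiable (by norm_num)) x t
      rw [hd2.unique hd1, flux_div lam M ν hf hg hm hpr hv x]
      have q1 := heq1 t ht x hx
      have q2 := heq2 t ht x hx
      have q4 := heq4 t ht x hx
      have q1' : deriv (fun s => φ x s) t = g x := dΦ.deriv
      rw [q1'] at q1
      have q3 : ∑ i, u x t i * deriv (fun s => u x s i) t
          = - (∑ i, u x t i * convect (fun y => u y t) (fun y => u y t) x i)
            + ν * (∑ i, u x t i * lap (fun y => u y t i) x)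
            - (∑ i, u x t i * pd i (fun y => p y t) x)
            - φ x t * (∑ i, u x t i * pd i (fun y => μ y t) x) := by
        simp only [Finset.mul_sum, ← Finset.sum_add_distrib, ← Finset.sum_sub_distrib,
          ← Finset.sum_neg_distrib]
        refine Finset.sum_congr rfl fun i _ => ?_
        linear_combination u x t i * heq3 t ht x hx i
      rw [← Finset.mul_sum, ← Finset.mul_sum, q3, q4]
      linear_combination (-(g x)) * q2 + μ x t * q1
    rw [setIntegral_congr_fun measurableSet_Icc hpoint]
    have cm : Continuous (fun x => ∑ i, (pd i (fun y => μ y t) x)^2) :=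
      continuous_finsetSum _ fun i _ => (contDiff_pd i hm).continuous.pow 2
    have cv : Continuous (fun x => ∑ i, ∑ j, (pd j (fun y => u y t i) x)^2) :=
      continuous_finsetSum _ fun i _ => continuous_finsetSum _ fun j _ =>
        (contDiff_pd j (hv i)).continuous.pow 2
    have hVc := flux_contDiff lam M ν hf hg hm hpr hv
    have cd : Continuous (fun x => ∑ j, pd j (flux lam M ν (fun y => φ y t) g (fun y => μ y t)
        (fun y => p y t) (fun y => u y t) j) x) :=
      continuous_finsetSum _ fun j _ => continuous_pd j (hVc j)
    have integ : ∀ {h : (Fin d → ℝ) → ℝ}, Continuous h →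
        Integrable h (volume.restrict (Set.Icc a b)) := fun hh =>
      hh.continuousOn.integrableOn_compact isCompact_Icc
    have cmv : Continuous (fun x => -M * ∑ i, (pd i (fun y => μ y t) x)^2
        - ν * ∑ i, ∑ j, (pd j (fun y => u y t i) x)^2) :=
      (cm.const_mul (-M)).sub (cv.const_mul ν)
    rw [integral_add (integ cd) (integ cmv),
      integral_sub (integ (cm.const_mul (-M))) (integ (cv.const_mul ν)),
      integral_const_mul, integral_const_mul, integral_div_zero hd hab _ hVc, zero_add]
    intro i x hx hface
    have h0 : u x t = 0 := hubc t ht x (mem_frontier_of_face hx i hface)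
    have h1 := hφbc t ht i x hx hface
    have h2 := hμbc t ht i x hx hface
    simp [flux, h0, h1, h2]
  have hneg : ∀ t, -M * (∫ x in Set.Icc a b, ∑ i, (pd i (fun y => μ y t) x)^2)
          - ν * (∫ x in Set.Icc a b, ∑ i, ∑ j, (pd j (fun y => u y t i) x)^2) ≤ 0 := by
    intro t
    have h1 : 0 ≤ ∫ x in Set.Icc a b, ∑ i, (pd i (fun y => μ y t) x)^2 :=
      integral_nonneg fun x => Finset.sum_nonneg fun i _ => sq_nonneg _
    have h2 : 0 ≤ ∫ x in Set.Icc a b, ∑ i, ∑ j, (pd j (fun y => u y t i) x)^2 :=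
      integral_nonneg fun x => Finset.sum_nonneg fun i _ => Finset.sum_nonneg fun j _ =>
        sq_nonneg _
    have h3 := mul_nonneg hM.le h1
    have h4 := mul_nonneg hν.le h2
    linarith
  refine ⟨fun t ht => ⟨?_, hneg t⟩, ?_⟩
  · rw [← hval t (Set.Ioo_subset_Icc_self ht)]
    exact hder t
  · have anti : AntitoneOn E (Set.Icc 0 T) := by
      apply antitoneOn_of_deriv_nonpos (convex_Icc 0 T)
      · exact fun t _ => (hder t).continuousAt.continuousWithinAt
      · exact fun t _ => (hder t).differentiableAt.differentiableWithinAt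
      · intro t ht
        rw [interior_Icc] at ht
        rw [(hder t).deriv, hval t (Set.Ioo_subset_Icc_self ht)]
        exact hneg t
    exact fun s hs t ht hst => anti hs ht hst
end
end
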